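/- arXiv:2108.08699 — 5 statements merged into one kernel-verified Lean document; each statement's English description precedes it below -/
import Mathlib

section
/- Let x, y be real numbers, let m, n be positive integers, and for each i = 1,…,m let ε_i ∈ {1, −1} and let w_{i,1},…,w_{i,n} be nonzero integers. Set p_i = #{j ∈ {1,…,n} : w_{i,j} > 0}. Suppose there is a real constant c such that for every real q with 0 < q < 1 one has ∑_{i=1}^m ε_i ∏_{j=1}^n (x + y·q^{w_{i,j}})/(1 − q^{w_{i,j}}) = c. Then c = ∑_{i=1}^m ε_i · x^{p_i} · (−y)^{n − p_i}. -/
/-!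
As `q → 0`, the power `q ^ w` tends to `0` if `w > 0` and its inverse tends to `0` if `w < 0`.
The factor `(x + y * t) / (1 - t)` tends to `x` as `t → 0`, and the substitution `t ↦ t⁻¹` exchanges
the roles of `x` and `-y`, so a fixed point with `p` positive weights among `n` contributes
`x ^ p * (-y) ^ (n - p)` in the limit. A constant sum is equal to its limit.
-/

open Filter Topology

section LocalizationFactor

variable {𝕜 : Type*} [Field 𝕜]

/-- The factor which a weight `w` contributes to the fixed-point formula for the `T_{x,y}`-genus,
as a function of `t = q ^ w`. It is only meaningful for `t ≠ 1`; its value at `t = 1` is `0`. -/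
def localizationFactor (x y t : 𝕜) : 𝕜 :=
  (x + y * t) / (1 - t)

theorem localizationFactor_inv (x y : 𝕜) {t : 𝕜} (ht : t ≠ 0) :
    localizationFactor x y t⁻¹ = localizationFactor (-y) (-x) t := by
  have numerator : (x + y * t⁻¹) * t = -(-y + -x * t) := by
    field_simp
    ring
  have denominator : (1 - t⁻¹) * t = -(1 - t) := by
    field_simp
    ring
  rw [localizationFactor, localizationFactor, ← mul_div_mul_right _ _ ht, numerator, denominator,
    neg_div_neg_eq]

variable [TopologicalSpace 𝕜] [IsTopologicalDivisionRing 𝕜]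

theorem tendsto_localizationFactor_nhds_zero (x y : 𝕜) :
    Tendsto (localizationFactor x y) (𝓝 0) (𝓝 x) := by
  have continuousAt_zero : ContinuousAt (localizationFactor x y) 0 :=
    ContinuousAt.div (by fun_prop) (by fun_prop) (by simp)
  simpa [localizationFactor] using continuousAt_zero.tendsto

theorem tendsto_localizationFactor_pow (x y : 𝕜) {k : ℕ} (hk : k ≠ 0) :
    Tendsto (fun q : 𝕜 => localizationFactor x y (q ^ k)) (𝓝[≠] 0) (𝓝 x) := by
  have pow_tendsto : Tendsto (fun q : 𝕜 => q ^ k) (𝓝 0) (𝓝 0) := by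
    simpa [hk] using (continuous_pow k).tendsto (0 : 𝕜)
  exact (tendsto_localizationFactor_nhds_zero x y).comp (pow_tendsto.mono_left nhdsWithin_le_nhds)

theorem tendsto_localizationFactor_zpow (x y : 𝕜) {w : ℤ} (hw : w ≠ 0) :
    Tendsto (fun q : 𝕜 => localizationFactor x y (q ^ w)) (𝓝[≠] 0)
      (𝓝 (if 0 < w then x else -y)) := by
  obtain ⟨k, rfl | rfl⟩ := w.eq_nat_or_neg
  · have hk : k ≠ 0 := by simpa using hw
    simpa [hk.pos] using tendsto_localizationFactor_pow x y hk
  · have hk : k ≠ 0 := by simpa using hw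
    have inverted : ∀ᶠ q : 𝕜 in 𝓝[≠] 0,
        localizationFactor (-y) (-x) (q ^ k) = localizationFactor x y (q ^ (-k : ℤ)) := by
      filter_upwards [self_mem_nhdsWithin] with q hq
      rw [zpow_neg, zpow_natCast, localizationFactor_inv x y (pow_ne_zero k hq)]
    rw [if_neg (by lia)]
    exact (tendsto_localizationFactor_pow (-y) (-x) hk).congr' inverted

end LocalizationFactor

theorem prod_ite_const_eq_pow_mul_pow {κ M : Type*} [Fintype κ] [CommMonoid M]
    (P : κ → Prop) [DecidablePred P] (a b : M) :
    ∏ j, (if P j then a else b) =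
      a ^ (Finset.univ.filter P).card * b ^ (Fintype.card κ - (Finset.univ.filter P).card) := by
  classical
  rw [Finset.prod_ite, Finset.prod_const, Finset.prod_const, Finset.filter_not,
    ← Finset.compl_eq_univ_sdiff, Finset.card_compl]

theorem frequently_nhdsNE_of_forall_mem_Ioo {α : Type*} [LinearOrder α] [TopologicalSpace α]
    [OrderTopology α] [DenselyOrdered α] {a b : α} (hab : a < b) {P : α → Prop}
    (h : ∀ q, a < q → q < b → P q) : ∃ᶠ q in 𝓝[≠] a, P q := by
  have : (𝓝[>] a).NeBot := nhdsGT_neBot_of_exists_gt ⟨b, hab⟩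
  have eventually_right : ∀ᶠ q in 𝓝[>] a, P q :=
    mem_of_superset (Ioo_mem_nhdsGT hab) fun q hq => h q hq.1 hq.2
  exact eventually_right.frequently.filter_mono (nhdsGT_le_nhdsNE a)

section FixedPointSum

variable {𝕜 ι κ : Type*} [Field 𝕜] [TopologicalSpace 𝕜] [IsTopologicalDivisionRing 𝕜]
  [Fintype ι] [Fintype κ]

theorem tendsto_prod_localizationFactor_zpow (x y : 𝕜) {w : κ → ℤ} (hw : ∀ j, w j ≠ 0) :
    Tendsto (fun q : 𝕜 => ∏ j, localizationFactor x y (q ^ w j)) (𝓝[≠] 0)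
      (𝓝 (x ^ (Finset.univ.filter fun j => 0 < w j).card *
        (-y) ^ (Fintype.card κ - (Finset.univ.filter fun j => 0 < w j).card))) := by
  rw [← prod_ite_const_eq_pow_mul_pow]
  exact tendsto_finsetProd _ fun j _ => tendsto_localizationFactor_zpow x y (hw j)

theorem stmt_0_general [T2Space 𝕜] (x y : 𝕜) (ε : ι → 𝕜) (w : ι → κ → ℤ)
    (hw : ∀ i j, w i j ≠ 0) (c : 𝕜)
    (hc : ∃ᶠ q : 𝕜 in 𝓝[≠] 0,
      ∑ i, ε i * ∏ j, (x + y * q ^ (w i j)) / (1 - q ^ (w i j)) = c) :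
    c = ∑ i, ε i * x ^ (Finset.univ.filter fun j => 0 < w i j).card *
      (-y) ^ (Fintype.card κ - (Finset.univ.filter fun j => 0 < w i j).card) := by
  simp_rw [mul_assoc]
  have sum_tendsto := tendsto_finsetSum Finset.univ fun i _ =>
    (tendsto_prod_localizationFactor_zpow x y (hw i)).const_mul (ε i)
  exact (tendsto_nhds_unique_of_frequently_eq sum_tendsto tendsto_const_nhds hc).symm

end FixedPointSum

/-- Generalized Atiyah–Hirzebruch localization formula for the `T_{x,y}`-genus,
with rigidity (constancy in `q` on `(0,1)`) as a hypothesis. -/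
theorem stmt_0 (x y : ℝ) (m n : ℕ) (hm : 0 < m) (hn : 0 < n)
    (ε : Fin m → ℝ) (hε : ∀ i, ε i = 1 ∨ ε i = -1)
    (w : Fin m → Fin n → ℤ) (hw : ∀ i j, w i j ≠ 0)
    (p : Fin m → ℕ) (hp : ∀ i, p i = (Finset.univ.filter fun j => 0 < w i j).card)
    (c : ℝ)
    (hc : ∀ q : ℝ, 0 < q → q < 1 →
      ∑ i, ε i * ∏ j, (x + y * q ^ (w i j)) / (1 - q ^ (w i j)) = c) :
    c = ∑ i, ε i * x ^ (p i) * (-y) ^ (n - p i) := by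
  simpa only [hp, Fintype.card_fin] using
    stmt_0_general x y ε w hw c (frequently_nhdsNE_of_forall_mem_Ioo one_pos hc)
end

section
/- Let m, n be positive integers, and for each i = 1,…,m let ε_i ∈ {1, −1} and let w_{i,1},…,w_{i,n} be nonzero integers. For 0 ≤ l ≤ n define the rational function χ_l = ∑_{i=1}^m ε_i · σ_l(q^{w_{i,1}},…,q^{w_{i,n}}) / ∏_{j=1}^n (1 − q^{w_{i,j}}) in the field ℚ(q) of rational functions over ℚ. If for every 0 ≤ l ≤ n the element χ_l is a constant, equal to the image of a rational number c_l, then c_l = (−1)^n · c_{n−l} for all 0 ≤ l ≤ n. -/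
/-- The `l`-th elementary symmetric polynomial evaluated at `t 0, …, t (n-1)`. -/
def esymm {K : Type*} [CommRing K] {n : ℕ} (l : ℕ) (t : Fin n → K) : K :=
  ∑ S ∈ Finset.powersetCard l (Finset.univ : Finset (Fin n)), ∏ j ∈ S, t j

/-!
The substitution `q ↦ q⁻¹` is a field automorphism of `K(q)` fixing the constants. It replaces every
`t = q ^ w` by `t⁻¹`, and multiplying numerator and denominator of a fixed-point contribution by
`∏ t j` turns `σ_k(t⁻¹)` into `σ_{n-k}(t)` and `∏ (1 - (t j)⁻¹)` into `(-1) ^ n * ∏ (1 - t j)`.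
Hence `χ_k(q⁻¹) = (-1) ^ n χ_{n-k}(q)`, and a constant `χ_k` is unchanged by the substitution.
-/

section Esymm

theorem map_esymm {R S F : Type*} [CommRing R] [CommRing S] [FunLike F R S] [RingHomClass F R S]
    (f : F) {n : ℕ} (l : ℕ) (t : Fin n → R) : f (esymm l t) = esymm l (fun j => f (t j)) := by
  simp only [esymm, map_sum, map_prod]

variable {K : Type*} [Field K] {n : ℕ} {t : Fin n → K}

theorem esymm_inv_mul_prod {k l : ℕ} (hkl : k + l = n) (ht : ∀ j, t j ≠ 0) :
    esymm k (fun j => (t j)⁻¹) * ∏ j, t j = esymm l t := by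
  unfold esymm
  rw [Finset.sum_mul]
  refine Finset.sum_bijective compl compl_bijective (fun S => ?_) (fun S _ => ?_)
  · have hcard : S.card + Sᶜ.card = n := by simp
    simp only [Finset.mem_powersetCard_univ]
    omega
  · have hcancel : (∏ j ∈ S, (t j)⁻¹) * ∏ j ∈ S, t j = 1 := by
      rw [← Finset.prod_mul_distrib]
      exact Finset.prod_eq_one fun j _ => inv_mul_cancel₀ (ht j)
    rw [← Finset.prod_mul_prod_compl S t, ← mul_assoc, hcancel, one_mul]

theorem prod_one_sub_inv_mul_prod (ht : ∀ j, t j ≠ 0) :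
    (∏ j, (1 - (t j)⁻¹)) * ∏ j, t j = (-1) ^ n * ∏ j, (1 - t j) := by
  have hfactor (j : Fin n) : (1 - (t j)⁻¹) * t j = -(1 - t j) := by
    rw [sub_mul, inv_mul_cancel₀ (ht j), one_mul, neg_sub]
  simp only [← Finset.prod_mul_distrib, hfactor, Finset.prod_neg, Finset.card_univ,
    Fintype.card_fin]

theorem esymm_inv_div_prod_one_sub_inv {k l : ℕ} (hkl : k + l = n) (ht : ∀ j, t j ≠ 0) :
    esymm k (fun j => (t j)⁻¹) / ∏ j, (1 - (t j)⁻¹) =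
      (-1) ^ n * (esymm l t / ∏ j, (1 - t j)) := by
  have hprod : ∏ j, t j ≠ 0 := Finset.prod_ne_zero_iff.2 fun j _ => ht j
  calc esymm k (fun j => (t j)⁻¹) / ∏ j, (1 - (t j)⁻¹)
      = (esymm k (fun j => (t j)⁻¹) * ∏ j, t j) / ((∏ j, (1 - (t j)⁻¹)) * ∏ j, t j) :=
        (mul_div_mul_right _ _ hprod).symm
    _ = esymm l t / ((-1) ^ n * ∏ j, (1 - t j)) := by
        rw [esymm_inv_mul_prod hkl ht, prod_one_sub_inv_mul_prod ht]
    _ = (-1) ^ n * (esymm l t / ∏ j, (1 - t j)) := by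
        rw [div_mul_eq_div_div_swap, div_eq_mul_inv _ ((-1 : K) ^ n), ← inv_pow, inv_neg_one,
          mul_comm]

end Esymm

section InvertX

variable (K : Type*) [Field K]

theorem transcendental_ratFunc_X_inv : Transcendental K (RatFunc.X : RatFunc K)⁻¹ :=
  fun h => RatFunc.transcendental_X (IsAlgebraic.inv_iff.1 h)

/-- The substitution `q ↦ q⁻¹` on the rational function field `K(q)`, as a `K`-algebra
endomorphism. -/
noncomputable def invertX : RatFunc K →ₐ[K] RatFunc K :=
  (IntermediateField.val _).comp
    (RatFunc.algEquivOfTranscendental _ (transcendental_ratFunc_X_inv K)).toAlgHom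

theorem invertX_X : invertX K RatFunc.X = RatFunc.X⁻¹ := by
  simp [invertX]

variable {K}

theorem invertX_C (a : K) : invertX K (RatFunc.C a) = RatFunc.C a :=
  (invertX K).commutes a

theorem invertX_X_zpow (w : ℤ) : invertX K (RatFunc.X ^ w) = (RatFunc.X ^ w)⁻¹ := by
  rw [map_zpow₀, invertX_X, inv_zpow]

end InvertX

section ChiCoeff

variable {K ι : Type*} [Field K] [Fintype ι] {n k l : ℕ}

/-- The coefficient `χ_l` of the `χ_y`-genus, as the sum of the contributions of isolated fixed
points indexed by `ι`, the `i`-th one having sign `ε i` and weights `w i`. The signs may be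
arbitrary scalars. A zero weight makes the denominator vanish, so that the contribution is the junk
value `0`. -/
noncomputable def chiCoeff (ε : ι → K) (w : ι → Fin n → ℤ) (l : ℕ) : RatFunc K :=
  ∑ i, RatFunc.C (ε i) * esymm l (fun j => (RatFunc.X : RatFunc K) ^ (w i j)) /
    ∏ j, (1 - (RatFunc.X : RatFunc K) ^ (w i j))

theorem invertX_chiCoeff (hkl : k + l = n) (ε : ι → K) (w : ι → Fin n → ℤ) :
    invertX K (chiCoeff ε w k) = (-1) ^ n * chiCoeff ε w l := by
  simp only [chiCoeff, map_sum, Finset.mul_sum]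
  refine Finset.sum_congr rfl fun i _ => ?_
  have hdual := esymm_inv_div_prod_one_sub_inv hkl
    fun j => zpow_ne_zero (w i j) (RatFunc.X_ne_zero (K := K))
  simp only [map_div₀, map_mul, map_prod, map_sub, map_one, map_esymm, invertX_C,
    invertX_X_zpow]
  rw [mul_div_assoc, hdual, mul_div_assoc, mul_left_comm]

theorem stmt_2_general (hkl : k + l = n) (ε : ι → K) (w : ι → Fin n → ℤ)
    (_hw : ∀ i j, w i j ≠ 0) {a : K} (hk : chiCoeff ε w k = RatFunc.C a) :
    chiCoeff ε w l = RatFunc.C ((-1) ^ n * a) :=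
  calc chiCoeff ε w l = (-1) ^ n * invertX K (chiCoeff ε w k) := by
        rw [invertX_chiCoeff hkl, ← mul_assoc, ← mul_pow, neg_one_mul, neg_neg, one_pow, one_mul]
    _ = RatFunc.C ((-1) ^ n * a) := by
        rw [hk, invertX_C, map_mul, map_pow, map_neg, map_one]

end ChiCoeff

/-- Lemma 2.3 of the paper: `χ^l(M) = (-1)^n χ^{n-l}(M)`, with rigidity
(constancy of each `χ_l` in `ℚ(q)`) taken as a hypothesis. -/
theorem stmt_2 (m n : ℕ) (hm : 0 < m) (hn : 0 < n)
    (ε : Fin m → ℚ) (hε : ∀ i, ε i = 1 ∨ ε i = -1)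
    (w : Fin m → Fin n → ℤ) (hw : ∀ i j, w i j ≠ 0)
    (c : ℕ → ℚ)
    (hc : ∀ l ≤ n,
      ∑ i, RatFunc.C (ε i) *
          esymm l (fun j => (RatFunc.X : RatFunc ℚ) ^ (w i j)) /
            ∏ j, (1 - (RatFunc.X : RatFunc ℚ) ^ (w i j))
        = RatFunc.C (c l)) :
    ∀ l ≤ n, c l = (-1) ^ n * c (n - l) := by
  intro l hl
  exact RatFunc.C_injective <| (hc l hl).symm.trans <|
    stmt_2_general (Nat.sub_add_cancel hl) ε w hw (hc (n - l) (Nat.sub_le n l))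
end

section
/- Let m be a positive integer, let n be an odd positive integer, and for each i = 1,…,m let ε_i ∈ {1, −1} and let w_{i,1},…,w_{i,n} be nonzero integers. Suppose there is a real constant c such that for every real q with q > 0 and q ≠ 1 one has ∑_{i=1}^m ε_i ∏_{j=1}^n (1 + q^{w_{i,j}})/(1 − q^{w_{i,j}}) = c. Then c = 0. -/
/-!
Each factor `(1 + x) / (1 - x)` changes sign under `x ↦ x⁻¹`, so a product of an odd number of
them does too. Hence the fixed-point sum is odd under `q ↦ q⁻¹`, and a value that it takes at both
`q` and `q⁻¹` must vanish.
-/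

section

variable {K ι κ : Type*} [Field K]

theorem one_add_inv_div_one_sub_inv {x : K} (hx₀ : x ≠ 0) (hx₁ : x ≠ 1) :
    (1 + x⁻¹) / (1 - x⁻¹) = -((1 + x) / (1 - x)) := by
  have hx : 1 - x ≠ 0 := sub_ne_zero.mpr hx₁.symm
  have hx_inv : 1 - x⁻¹ ≠ 0 := sub_ne_zero.mpr (inv_ne_one.mpr hx₁).symm
  rw [← neg_div, div_eq_div_iff hx_inv hx]
  field_simp
  ring

theorem prod_one_add_inv_div_one_sub_inv {s : Finset κ} (hs : Odd s.card) {x : κ → K}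
    (hx₀ : ∀ j ∈ s, x j ≠ 0) (hx₁ : ∀ j ∈ s, x j ≠ 1) :
    ∏ j ∈ s, (1 + (x j)⁻¹) / (1 - (x j)⁻¹) = -∏ j ∈ s, (1 + x j) / (1 - x j) :=
  calc
    ∏ j ∈ s, (1 + (x j)⁻¹) / (1 - (x j)⁻¹) = ∏ j ∈ s, -((1 + x j) / (1 - x j)) :=
      Finset.prod_congr rfl fun j hj => one_add_inv_div_one_sub_inv (hx₀ j hj) (hx₁ j hj)
    _ = -∏ j ∈ s, (1 + x j) / (1 - x j) := by
      rw [Finset.prod_neg, hs.neg_one_pow, neg_one_mul]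

variable [Fintype ι] [Fintype κ]

/-- The fixed-point expression for the equivariant signature: the sum over the fixed points `i`,
with coefficients `ε i` (arbitrary scalars, not only signs) and weights `w i j`, of the local
contributions `∏ j, (1 + q ^ w i j) / (1 - q ^ w i j)`. It is meaningful only when no
`q ^ w i j` equals `1`. -/
def signatureSum (ε : ι → K) (w : ι → κ → ℤ) (q : K) : K :=
  ∑ i, ε i * ∏ j, (1 + q ^ w i j) / (1 - q ^ w i j)

variable {w : ι → κ → ℤ} {q : K}

theorem signatureSum_inv (hκ : Odd (Fintype.card κ)) (ε : ι → K) (hq : q ≠ 0)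
    (hw : ∀ i j, q ^ w i j ≠ 1) : signatureSum ε w q⁻¹ = -signatureSum ε w q := by
  have local_contribution_inv (i : ι) :
      ∏ j, (1 + q⁻¹ ^ w i j) / (1 - q⁻¹ ^ w i j) = -∏ j, (1 + q ^ w i j) / (1 - q ^ w i j) := by
    simp only [inv_zpow]
    exact prod_one_add_inv_div_one_sub_inv hκ (fun j _ => zpow_ne_zero _ hq) fun j _ => hw i j
  simp only [signatureSum, local_contribution_inv, mul_neg, Finset.sum_neg_distrib]

theorem stmt_3_general [NeZero (2 : K)] (hκ : Odd (Fintype.card κ)) (ε : ι → K) (hq : q ≠ 0)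
    (hw : ∀ i j, q ^ w i j ≠ 1) {c : K} (hc : signatureSum ε w q = c)
    (hc_inv : signatureSum ε w q⁻¹ = c) : c = 0 := by
  have eq_neg : c = -c := by
    rw [← hc, ← signatureSum_inv hκ ε hq hw, hc, hc_inv]
  have two_mul_eq_zero : 2 * c = 0 := by
    rw [two_mul, ← eq_neg_iff_add_eq_zero, ← eq_neg]
  exact (mul_eq_zero.mp two_mul_eq_zero).resolve_left two_ne_zero

end

/-- Corollary 2.5 of the paper: the signature (the `T_{1,1}`-genus) of a unitary
`S^1`-manifold of real dimension `2n` with isolated fixed points vanishes when `n`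
is odd, with rigidity (constancy in `q`) taken as a hypothesis. -/
theorem stmt_3 (m n : ℕ) (hm : 0 < m) (hn : 0 < n) (hodd : Odd n)
    (ε : Fin m → ℝ) (hε : ∀ i, ε i = 1 ∨ ε i = -1)
    (w : Fin m → Fin n → ℤ) (hw : ∀ i j, w i j ≠ 0)
    (c : ℝ)
    (hc : ∀ q : ℝ, 0 < q → q ≠ 1 →
      ∑ i, ε i * ∏ j, (1 + q ^ (w i j)) / (1 - q ^ (w i j)) = c) :
    c = 0 := by
  have two_zpow_ne_one (i : Fin m) (j : Fin n) : (2 : ℝ) ^ w i j ≠ 1 :=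
    (zpow_eq_one_iff_right₀ zero_le_two (by norm_num)).not.mpr (hw i j)
  exact stmt_3_general (by rwa [Fintype.card_fin]) ε two_ne_zero two_zpow_ne_one
    (hc 2 (by norm_num) (by norm_num)) (hc 2⁻¹ (by norm_num) (by norm_num))
end

section
/- Let n be a positive integer, let w_1,…,w_n be nonzero integers, let 0 ≤ l ≤ n, and set d = #{j ∈ {1,…,n} : w_j < 0}. Then the function q ↦ σ_l(q^{w_1},…,q^{w_n}) / ∏_{j=1}^n (1 − q^{w_j}), defined for real q with 0 < q < 1, tends, as q tends to 0 from the right, to (−1)^l if d = l, and to 0 if d ≠ l. -/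
open Filter Topology

/-!
Distributing the denominator over the monomials of `σ_l` gives
`σ_l(t) / ∏ j, (1 - t j) = ∑ S, (∏ j ∈ S, t j / (1 - t j)) * ∏ j ∉ S, (1 - t j)⁻¹`, where `S` runs
over the sets of size `l`. If `t j → 0`, the two kinds of factors tend to `0` and `1`; if
`t j → ∞`, they tend to `-1` and `0`. Hence the only term that survives in the limit is the one
where `S` is the set of indices with `t j → ∞`. For `t j = q ^ w j` these are the indices of
negative weights.
-/

theorem esymm_div_prod_one_sub {K : Type*} [Field K] {n : ℕ} (l : ℕ) (t : Fin n → K) :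
    esymm l t / ∏ j, (1 - t j) =
      ∑ S ∈ Finset.powersetCard l Finset.univ,
        (∏ j ∈ S, t j / (1 - t j)) * ∏ j ∈ Sᶜ, (1 - t j)⁻¹ := by
  rw [esymm, Finset.sum_div]
  refine Finset.sum_congr rfl fun S _ => ?_
  rw [Finset.prod_div_distrib, Finset.prod_inv_distrib, ← Finset.prod_mul_prod_compl S,
    div_mul_eq_div_div, div_eq_mul_inv _ (∏ j ∈ Sᶜ, (1 - t j))]

section SignSum

variable {ι R : Type*} [Fintype ι] [DecidableEq ι] [CommRing R]

theorem prod_ite_neg_one_mul_prod_compl_ite (S N : Finset ι) :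
    (∏ j ∈ S, if j ∈ N then (-1 : R) else 0) * ∏ j ∈ Sᶜ, (if j ∈ N then (0 : R) else 1) =
      if S = N then (-1) ^ S.card else 0 := by
  have compl_iff : (∀ j ∈ Sᶜ, j ∉ N) ↔ N ⊆ S := by
    simp only [Finset.mem_compl, not_imp_not, Finset.subset_iff]
  simp only [← ite_not (_ ∈ N) (1 : R) 0, Finset.prod_ite_zero, Finset.prod_const, compl_iff,
    one_pow, ← Finset.subset_iff, mul_ite, mul_one, mul_zero, ← ite_and,
    Finset.Subset.antisymm_iff, and_comm]

theorem sum_powersetCard_prod_ite_neg_one (l : ℕ) (N : Finset ι) :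
    ∑ S ∈ Finset.powersetCard l Finset.univ,
        (∏ j ∈ S, if j ∈ N then (-1 : R) else 0) * ∏ j ∈ Sᶜ, (if j ∈ N then (0 : R) else 1) =
      if N.card = l then (-1) ^ l else 0 := by
  simp only [prod_ite_neg_one_mul_prod_compl_ite, Finset.sum_ite_eq',
    Finset.mem_powersetCard_univ]
  split_ifs with hcard
  · rw [hcard]
  · rfl

end SignSum

section DivisionRing

variable {K : Type*} [DivisionRing K]

theorem inv_one_sub_eq_neg_inv_div {t : K} (ht : t ≠ 0) :
    (1 - t)⁻¹ = -(t⁻¹ / (1 - t⁻¹)) := by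
  rw [← div_neg, neg_sub, inv_eq_one_div t, div_sub_one ht, div_div_div_cancel_right₀ ht, one_div]

theorem div_one_sub_eq_neg_inv_one_sub_inv {t : K} (ht : t ≠ 0) :
    t / (1 - t) = -(1 - t⁻¹)⁻¹ := by
  rw [← inv_neg, neg_sub, inv_eq_one_div t, div_sub_one ht, inv_div]

variable [TopologicalSpace K] [IsTopologicalDivisionRing K] {α : Type*} {F : Filter α}

theorem tendsto_inv_one_sub_of_tendsto_zero {t : α → K} (ht : Tendsto t F (𝓝 0)) :
    Tendsto (fun x => (1 - t x)⁻¹) F (𝓝 1) := by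
  simpa using (ht.const_sub 1).inv₀ (by simp)

theorem tendsto_div_one_sub_of_tendsto_zero {t : α → K} (ht : Tendsto t F (𝓝 0)) :
    Tendsto (fun x => t x / (1 - t x)) F (𝓝 0) := by
  simpa [div_eq_mul_inv] using ht.mul (tendsto_inv_one_sub_of_tendsto_zero ht)

-- In a topological division ring, `t⁻¹ → 0` through nonzero values expresses `t → ∞`.
theorem tendsto_inv_one_sub_of_tendsto_inv_nhdsNE_zero {t : α → K}
    (ht : Tendsto (fun x => (t x)⁻¹) F (𝓝[≠] 0)) :
    Tendsto (fun x => (1 - t x)⁻¹) F (𝓝 0) := by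
  obtain ⟨ht_zero, ht_ne⟩ := tendsto_nhdsWithin_iff.1 ht
  rw [← neg_zero]
  refine (tendsto_div_one_sub_of_tendsto_zero ht_zero).neg.congr' ?_
  filter_upwards [ht_ne] with x hx
  exact (inv_one_sub_eq_neg_inv_div (inv_eq_zero.not.1 hx)).symm

theorem tendsto_div_one_sub_of_tendsto_inv_nhdsNE_zero {t : α → K}
    (ht : Tendsto (fun x => (t x)⁻¹) F (𝓝[≠] 0)) :
    Tendsto (fun x => t x / (1 - t x)) F (𝓝 (-1)) := by
  obtain ⟨ht_zero, ht_ne⟩ := tendsto_nhdsWithin_iff.1 ht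
  refine (tendsto_inv_one_sub_of_tendsto_zero ht_zero).neg.congr' ?_
  filter_upwards [ht_ne] with x hx
  exact (div_one_sub_eq_neg_inv_one_sub_inv (inv_eq_zero.not.1 hx)).symm

theorem tendsto_zpow_nhdsNE_zero {m : ℤ} (hm : 0 < m) :
    Tendsto (fun q : K => q ^ m) (𝓝[≠] 0) (𝓝[≠] 0) := by
  refine tendsto_nhdsWithin_iff.2 ⟨?_, ?_⟩
  · have hcont : ContinuousAt (fun q : K => q ^ m) 0 := continuousAt_zpow₀ 0 m (Or.inr hm.le)
    simpa only [zero_zpow m hm.ne'] using hcont.tendsto.mono_left nhdsWithin_le_nhds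
  · filter_upwards [self_mem_nhdsWithin] with q hq
    exact zpow_ne_zero m hq

end DivisionRing

section Field

variable {K : Type*} [Field K] [TopologicalSpace K] [IsTopologicalDivisionRing K]

theorem tendsto_esymm_div_prod_one_sub {α : Type*} {F : Filter α} {n : ℕ} {t : α → Fin n → K}
    (l : ℕ) (N : Finset (Fin n))
    (ht_inv : ∀ j ∈ N, Tendsto (fun x => (t x j)⁻¹) F (𝓝[≠] 0))
    (ht_zero : ∀ j ∉ N, Tendsto (fun x => t x j) F (𝓝 0)) :
    Tendsto (fun x => esymm l (t x) / ∏ j, (1 - t x j)) F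
      (𝓝 (if N.card = l then (-1) ^ l else 0)) := by
  have mem_factor (j : Fin n) :
      Tendsto (fun x => t x j / (1 - t x j)) F (𝓝 (if j ∈ N then -1 else 0)) := by
    split_ifs with hj
    · exact tendsto_div_one_sub_of_tendsto_inv_nhdsNE_zero (ht_inv j hj)
    · exact tendsto_div_one_sub_of_tendsto_zero (ht_zero j hj)
  have compl_factor (j : Fin n) :
      Tendsto (fun x => (1 - t x j)⁻¹) F (𝓝 (if j ∈ N then 0 else 1)) := by
    split_ifs with hj
    · exact tendsto_inv_one_sub_of_tendsto_inv_nhdsNE_zero (ht_inv j hj)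
    · exact tendsto_inv_one_sub_of_tendsto_zero (ht_zero j hj)
  simp only [esymm_div_prod_one_sub, ← sum_powersetCard_prod_ite_neg_one]
  exact tendsto_finsetSum _ fun S _ =>
    (tendsto_finsetProd _ fun j _ => mem_factor j).mul
      (tendsto_finsetProd _ fun j _ => compl_factor j)

theorem stmt_10_general {n : ℕ} (w : Fin n → ℤ) (hw : ∀ j, w j ≠ 0) (l : ℕ) :
    Tendsto (fun q : K => esymm l (fun j => q ^ w j) / ∏ j, (1 - q ^ w j)) (𝓝[≠] 0)
      (𝓝 (if (Finset.univ.filter fun j => w j < 0).card = l then (-1) ^ l else 0)) := by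
  refine tendsto_esymm_div_prod_one_sub l _ (fun j hj => ?_) (fun j hj => ?_)
  · have hneg : w j < 0 := by simpa using hj
    simpa only [zpow_neg] using tendsto_zpow_nhdsNE_zero (K := K) (neg_pos.2 hneg)
  · have hpos : 0 < w j := (hw j).symm.lt_of_le (by simpa using hj)
    exact (tendsto_zpow_nhdsNE_zero hpos).mono_right nhdsWithin_le_nhds

end Field

/-- The constant-term computation of Section 4 of the paper: a fixed point
contributes `(-1)^l` to `χ^l(M)` exactly when it has `l` negative weights. -/
theorem stmt_10 (n : ℕ) (hn : 0 < n)
    (w : Fin n → ℤ) (hw : ∀ j, w j ≠ 0)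
    (l : ℕ) (hl : l ≤ n)
    (d : ℕ) (hd : d = (Finset.univ.filter fun j => w j < 0).card) :
    Tendsto (fun q : ℝ => esymm l (fun j => q ^ (w j)) / ∏ j, (1 - q ^ (w j)))
      (nhdsWithin 0 (Set.Ioo 0 1))
      (nhds (if d = l then (-1 : ℝ) ^ l else 0)) := by
  subst hd
  exact (stmt_10_general w hw l).mono_left (nhdsWithin_mono 0 fun _ hq => hq.1.ne')
end

section
/- Let K be a field, let m ≥ 2 be an integer, and let c_1,…,c_m ∈ K satisfy c_i ≠ 1 for every 2 ≤ i ≤ m. Define u_0 = 1, u_1 = (c_1 − c_2)/(c_2 − 1), u_i = (c_1 − 1)(c_i − c_{i+1}) / ((c_i − 1)(c_{i+1} − 1)) for 2 ≤ i ≤ m − 1, and u_m = c_m(1 − c_1)/(c_m − 1). Then: (a) for every 1 ≤ i ≤ m, c_i · (u_0 + u_1 + ⋯ + u_{i−1}) + (u_i + u_{i+1} + ⋯ + u_m) = 0; (b) for every 2 ≤ l ≤ m, u_0 + u_1 + ⋯ + u_{l−1} = (c_1 − 1)/(c_l − 1) and u_l + u_{l+1} + ⋯ + u_m = −c_l(c_1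 − 1)/(c_l − 1); (c) u_1 + u_2 + ⋯ + u_m = −c_1. -/
/-!
Write `S i = u 0 + ⋯ + u (i - 1)`. Row `i` of the system reads `(c i - 1) * S i + S (m + 1) = 0`.
By partial fractions `u i = (c 1 - 1) / (c (i + 1) - 1) - (c 1 - 1) / (c i - 1)` for
`2 ≤ i < m`, so these sums telescope to `S i = (c 1 - 1) / (c i - 1)` for `2 ≤ i ≤ m`, and the
last entry `u m` makes the total `S (m + 1) = 1 - c 1`. Hence `(c i - 1) * S i = c 1 - 1` for all
`1 ≤ i ≤ m`, every row vanishes, and the `i`-th tail sum is `-(c i * S i)`.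
-/

theorem mul_sum_range_add_sum_Icc {R : Type*} [Ring R] (u : ℕ → R) (x : R) {i n : ℕ}
    (hin : i ≤ n + 1) :
    x * ∑ j ∈ Finset.range i, u j + ∑ j ∈ Finset.Icc i n, u j =
      (x - 1) * ∑ j ∈ Finset.range i, u j + ∑ j ∈ Finset.range (n + 1), u j := by
  rw [← Finset.Ico_add_one_right_eq_Icc, Finset.sum_Ico_eq_sub u hin, sub_one_mul]
  abel

section Field

variable {K : Type*} [Field K]

theorem mul_sub_div_sub_one_mul_sub_one (a : K) {x y : K} (hx : x ≠ 1) (hy : y ≠ 1) :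
    a * (x - y) / ((x - 1) * (y - 1)) = a / (y - 1) - a / (x - 1) := by
  rw [div_sub_div _ _ (sub_ne_zero.mpr hy) (sub_ne_zero.mpr hx)]
  ring

theorem sum_range_eq_div_sub_one {c u : ℕ → K} {a : K} {k l : ℕ} (hkl : k ≤ l)
    (hc : ∀ i, k ≤ i → i ≤ l → c i ≠ 1)
    (hk : ∑ j ∈ Finset.range k, u j = a / (c k - 1))
    (hu : ∀ i, k ≤ i → i < l →
      u i = a * (c i - c (i + 1)) / ((c i - 1) * (c (i + 1) - 1))) :
    ∑ j ∈ Finset.range l, u j = a / (c l - 1) := by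
  have hincrement : ∀ i ∈ Finset.Ico k l, u i = a / (c (i + 1) - 1) - a / (c i - 1) := by
    intro i hi
    obtain ⟨hki, hil⟩ := Finset.mem_Ico.mp hi
    rw [hu i hki hil, mul_sub_div_sub_one_mul_sub_one a (hc i hki hil.le)
      (hc (i + 1) (by lia) hil)]
  calc ∑ j ∈ Finset.range l, u j
      = ∑ j ∈ Finset.range k, u j + ∑ j ∈ Finset.Ico k l, u j :=
        (Finset.sum_range_add_sum_Ico u hkl).symm
    _ = a / (c k - 1) + (a / (c l - 1) - a / (c k - 1)) := by
        rw [hk, Finset.sum_congr rfl hincrement,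
          Finset.sum_Ico_sub (fun i ↦ a / (c i - 1)) hkl]
    _ = a / (c l - 1) := add_sub_cancel _ _

theorem one_add_sub_div_sub_one (b : K) {x : K} (hx : x ≠ 1) :
    1 + (b - x) / (x - 1) = (b - 1) / (x - 1) := by
  rw [one_add_div (sub_ne_zero.mpr hx)]
  ring

theorem div_sub_one_add_mul_div_sub_one (b : K) {x : K} (hx : x ≠ 1) :
    (b - 1) / (x - 1) + x * (1 - b) / (x - 1) = 1 - b := by
  rw [← add_div, div_eq_iff (sub_ne_zero.mpr hx)]
  ring

end Field

/-- The explicit solution (equations (3.9) and (3.10) of the paper) of the triangular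
linear system `W(q)·u = 0` arising in the proof of the key Lemma 3.1. -/
theorem stmt_12 {K : Type*} [Field K] (m : ℕ) (hm : 2 ≤ m)
    (c : ℕ → K) (hc : ∀ i, 2 ≤ i → i ≤ m → c i ≠ 1)
    (u : ℕ → K)
    (hu0 : u 0 = 1)
    (hu1 : u 1 = (c 1 - c 2) / (c 2 - 1))
    (hui : ∀ i, 2 ≤ i → i ≤ m - 1 →
      u i = (c 1 - 1) * (c i - c (i + 1)) / ((c i - 1) * (c (i + 1) - 1)))
    (hum : u m = c m * (1 - c 1) / (c m - 1)) :
    (∀ i, 1 ≤ i → i ≤ m →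
        c i * (∑ j ∈ Finset.range i, u j) + ∑ j ∈ Finset.Icc i m, u j = 0) ∧
    (∀ l, 2 ≤ l → l ≤ m →
        (∑ j ∈ Finset.range l, u j = (c 1 - 1) / (c l - 1) ∧
         ∑ j ∈ Finset.Icc l m, u j = -(c l * (c 1 - 1)) / (c l - 1))) ∧
    (∑ j ∈ Finset.Icc 1 m, u j = -(c 1)) := by
  have hpartial (l : ℕ) (hl : 2 ≤ l) (hlm : l ≤ m) :
      ∑ j ∈ Finset.range l, u j = (c 1 - 1) / (c l - 1) := by
    refine sum_range_eq_div_sub_one hl (fun i hi hil ↦ hc i hi (hil.trans hlm)) ?_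
      fun i hi hil ↦ hui i hi (by lia)
    rw [Finset.sum_range_succ, Finset.sum_range_one, hu0, hu1,
      one_add_sub_div_sub_one _ (hc 2 le_rfl hm)]
  have htotal : ∑ j ∈ Finset.range (m + 1), u j = 1 - c 1 := by
    rw [Finset.sum_range_succ, hpartial m hm le_rfl, hum,
      div_sub_one_add_mul_div_sub_one _ (hc m hm le_rfl)]
  have hscaled (i : ℕ) (hi : 1 ≤ i) (him : i ≤ m) :
      (c i - 1) * ∑ j ∈ Finset.range i, u j = c 1 - 1 := by
    obtain rfl | hi := hi.eq_or_lt
    · rw [Finset.sum_range_one, hu0, mul_one]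
    · rw [hpartial i hi him, mul_div_cancel₀ _ (sub_ne_zero.mpr (hc i hi him))]
  have hrow (i : ℕ) (hi : 1 ≤ i) (him : i ≤ m) :
      c i * (∑ j ∈ Finset.range i, u j) + ∑ j ∈ Finset.Icc i m, u j = 0 := by
    rw [mul_sum_range_add_sum_Icc u _ (by lia), hscaled i hi him, htotal, sub_add_sub_cancel,
      sub_self]
  refine ⟨hrow, fun l hl hlm ↦ ⟨hpartial l hl hlm, ?_⟩, ?_⟩
  · rw [eq_neg_of_add_eq_zero_right (hrow l (by lia) hlm), hpartial l hl hlm, mul_div_assoc',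
      neg_div]
  · rw [eq_neg_of_add_eq_zero_right (hrow 1 le_rfl (by lia)), Finset.sum_range_one, hu0, mul_one]
end
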